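/- Let X be a compact metric space, Λ a compact metric space, w : Λ × X → X a weakly hyperbolic IFS, and p a Borel probability measure on Λ. Then for every a ∈ X the sequence of measures T_pⁿ(δ_a) converges in the weak* topology to a Borel probability measure ν on X, and ν is invariant for w, i.e. T_p(ν) = ν. -/

import Mathlib

open Metric Set Filter Topology MeasureTheory

/-- `seqComp w σ n = w_{σ₁} ∘ ⋯ ∘ w_{σₙ}` (with `σ i` denoting `σ_{i+1}`). -/
def seqComp {Λ X : Type*} (w : Λ → X → X) (σ : ℕ → Λ) : ℕ → X → X
  | 0 => id
  | n + 1 => seqComp w σ n ∘ w (σ n)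

/-!
The transfer operator `T` on measures is dual to the Markov operator `P f x = ∫ f (w_λ x) dp(λ)` on
continuous functions, and `Pⁿ f x` averages `f (w_{λ₁…λₙ} x)` over random words. Compactness of
`Λ^ℕ` makes the contraction of the maps `w_{σ₁…σₙ}` uniform in `σ`, so `Pⁿ f` oscillates
arbitrarily little for large `n`. Dually, any two orbits of `T` are weakly asymptotic. Comparing
the orbits of `μ` and `T μ` shows that a cluster point of `Tⁿ μ` is invariant, and comparing an
arbitrary orbit with that of the invariant measure shows that it converges.
-/

section SeqComp

variable {Λ X : Type*} {w : Λ → X → X}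

lemma seqComp_congr {σ τ : ℕ → Λ} {n : ℕ} (h : ∀ i < n, σ i = τ i) :
    seqComp w σ n = seqComp w τ n := by
  induction n with
  | zero => rfl
  | succ n ih =>
    simp only [seqComp, ih fun i hi => h i (hi.trans n.lt_succ_self), h n n.lt_succ_self]

lemma seqComp_update_succ (σ : ℕ → Λ) (n : ℕ) (l : Λ) :
    seqComp w (Function.update σ n l) (n + 1) = seqComp w σ n ∘ w l := by
  rw [seqComp, Function.update_self,
    seqComp_congr fun i hi => Function.update_of_ne hi.ne l σ]

lemma antitone_range_seqComp (σ : ℕ → Λ) : Antitone fun n => range (seqComp w σ n) :=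
  antitone_nat_of_succ_le fun _ => range_comp_subset_range _ _

lemma continuous_seqComp [TopologicalSpace Λ] [TopologicalSpace X]
    (hw : Continuous fun q : Λ × X => w q.1 q.2) (n : ℕ) :
    Continuous fun q : (ℕ → Λ) × X => seqComp w q.1 n q.2 := by
  induction n with
  | zero => exact continuous_snd
  | succ n ih =>
    have apply_last : Continuous fun q : (ℕ → Λ) × X => w (q.1 n) q.2 :=
      hw.comp₂ ((continuous_apply n).comp continuous_fst) continuous_snd
    exact ih.comp (continuous_fst.prodMk apply_last)

lemma isOpen_setOf_forall_dist_seqComp_lt [TopologicalSpace Λ] [PseudoMetricSpace X]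
    [CompactSpace X] (hw : Continuous fun q : Λ × X => w q.1 q.2) (n : ℕ) (ε : ℝ) :
    IsOpen {σ : ℕ → Λ | ∀ x y, dist (seqComp w σ n x) (seqComp w σ n y) < ε} := by
  have continuous_dist : Continuous fun q : (ℕ → Λ) × X × X =>
      dist (seqComp w q.1 n q.2.1) (seqComp w q.1 n q.2.2) := by
    have h := continuous_seqComp hw n
    exact (h.comp (continuous_fst.prodMk (continuous_fst.comp continuous_snd))).dist
      (h.comp (continuous_fst.prodMk (continuous_snd.comp continuous_snd)))
  refine isOpen_iff_mem_nhds.2 fun σ hσ => ?_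
  have tube : ∀ᶠ τ in 𝓝 σ, ∀ z ∈ (univ : Set (X × X)),
      dist (seqComp w τ n z.1) (seqComp w τ n z.2) < ε :=
    isCompact_univ.eventually_forall_of_forall_eventually fun z _ =>
      (continuous_dist.tendsto (σ, z)).eventually_lt_const (hσ z.1 z.2)
  filter_upwards [tube] with τ hτ x y using hτ (x, y) (mem_univ _)

theorem exists_forall_dist_seqComp_lt [TopologicalSpace Λ] [CompactSpace Λ]
    [PseudoMetricSpace X] [CompactSpace X] (hw : Continuous fun q : Λ × X => w q.1 q.2)
    (hyp : ∀ σ : ℕ → Λ, Tendsto (fun n => diam (range (seqComp w σ n))) atTop (𝓝 0))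
    {ε : ℝ} (hε : 0 < ε) :
    ∃ n, ∀ σ x y, dist (seqComp w σ n x) (seqComp w σ n y) < ε := by
  let U (n : ℕ) : Set (ℕ → Λ) := {σ | ∀ x y, dist (seqComp w σ n x) (seqComp w σ n y) < ε}
  have monotone_U : Monotone U := by
    intro m n hmn σ hσ x y
    obtain ⟨x', hx'⟩ := antitone_range_seqComp σ hmn (mem_range_self x)
    obtain ⟨y', hy'⟩ := antitone_range_seqComp σ hmn (mem_range_self y)
    exact hx' ▸ hy' ▸ hσ x' y'
  have cover : univ ⊆ ⋃ n, U n := by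
    intro σ _
    obtain ⟨n, hn⟩ := ((hyp σ).eventually_lt_const hε).exists
    exact mem_iUnion.2 ⟨n, fun x y => (dist_le_diam_of_mem isBounded_of_compactSpace
      (mem_range_self x) (mem_range_self y)).trans_lt hn⟩
  obtain ⟨n, hn⟩ := isCompact_univ.elim_directed_cover U
    (isOpen_setOf_forall_dist_seqComp_lt hw · ε) cover monotone_U.directed_le
  exact ⟨n, fun σ => hn (mem_univ σ)⟩

end SeqComp

section MarkovDual

variable {X : Type*} [TopologicalSpace X] [MeasurableSpace X]
  {T : ProbabilityMeasure X → ProbabilityMeasure X} {P : C(X, ℝ) → C(X, ℝ)}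

/-- The action `T` on probability measures is dual to the action `P` on continuous functions, under
the pairing `(μ, f) ↦ ∫ f dμ`. -/
def IsMarkovDual (T : ProbabilityMeasure X → ProbabilityMeasure X)
    (P : C(X, ℝ) → C(X, ℝ)) : Prop :=
  ∀ (μ : ProbabilityMeasure X) (f : C(X, ℝ)), ∫ x, f x ∂(T μ : Measure X) = ∫ x, P f x ∂μ

/-- The iterates of `P` make the oscillation of every continuous function arbitrarily small.
A single good iterate is requested for each `ε`; when `P` is dual to an action on probability
measures, the later iterates are then good as well. -/
def HasVanishingOscillation (P : C(X, ℝ) → C(X, ℝ)) : Prop :=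
  ∀ (f : C(X, ℝ)) (ε : ℝ), 0 < ε → ∃ n, ∀ x y, dist (P^[n] f x) (P^[n] f y) ≤ ε

lemma IsMarkovDual.iterate (h : IsMarkovDual T P) (n : ℕ) : IsMarkovDual T^[n] P^[n] := by
  intro μ f
  induction n generalizing f with
  | zero => rfl
  | succ n ih => rw [Function.iterate_succ_apply', h, ih, Function.iterate_succ_apply]

variable [CompactSpace X]

lemma dist_integral_le_of_oscillation_le [OpensMeasurableSpace X] {f : C(X, ℝ)} {ε : ℝ}
    (hf : ∀ x y, dist (f x) (f y) ≤ ε) (μ ν : ProbabilityMeasure X) :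
    dist (∫ x, f x ∂(μ : Measure X)) (∫ x, f x ∂(ν : Measure X)) ≤ ε := by
  have integral_mem_closedBall (ρ : ProbabilityMeasure X) {c : ℝ} (hc : ∀ x, dist (f x) c ≤ ε) :
      ∫ x, f x ∂(ρ : Measure X) ∈ closedBall c ε :=
    (convex_closedBall c ε).integral_mem isClosed_closedBall (.of_forall hc)
      (f.continuous.integrable_of_hasCompactSupport (.of_compactSpace f))
  refine integral_mem_closedBall μ fun x => ?_
  rw [dist_comm]
  exact integral_mem_closedBall ν fun y => hf y x

theorem IsMarkovDual.tendsto_dist_integral_iterate [OpensMeasurableSpace X]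
    (h : IsMarkovDual T P) (hP : HasVanishingOscillation P) (μ ν : ProbabilityMeasure X)
    (f : C(X, ℝ)) :
    Tendsto (fun n => dist (∫ x, f x ∂(T^[n] μ : Measure X)) (∫ x, f x ∂(T^[n] ν : Measure X)))
      atTop (𝓝 0) := by
  refine tendsto_order.2 ⟨fun c hc => .of_forall fun n => hc.trans_le dist_nonneg,
    fun ε hε => ?_⟩
  obtain ⟨N, hN⟩ := hP f (ε / 2) (half_pos hε)
  filter_upwards [eventually_ge_atTop N] with n hn
  obtain ⟨k, rfl⟩ := Nat.exists_eq_add_of_le hn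
  rw [Function.iterate_add_apply, Function.iterate_add_apply, h.iterate N, h.iterate N]
  exact (dist_integral_le_of_oscillation_le hN _ _).trans_lt (half_lt_self hε)

theorem IsMarkovDual.exists_fixedPoint [T2Space X] [BorelSpace X] [HasOuterApproxClosed X]
    [Nonempty X] (h : IsMarkovDual T P) (hP : HasVanishingOscillation P) :
    ∃ ν, T ν = ν := by
  obtain ⟨a⟩ := ‹Nonempty X›
  let μ : ProbabilityMeasure X := ⟨Measure.dirac a, inferInstance⟩
  let U : Ultrafilter ℕ := hyperfilter ℕ
  obtain ⟨ν, hν⟩ : ∃ ν, Tendsto (fun n => T^[n] μ) U (𝓝 ν) :=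
    ⟨_, (U.map fun n => T^[n] μ).le_nhds_lim⟩
  have tendsto_integral (f : C(X, ℝ)) :
      Tendsto (fun n => ∫ x, f x ∂(T^[n] μ : Measure X)) U (𝓝 (∫ x, f x ∂(ν : Measure X))) :=
    ProbabilityMeasure.tendsto_iff_forall_integral_tendsto.1 hν
      (BoundedContinuousFunction.mkOfCompact f)
  have integral_eq (f : C(X, ℝ)) :
      ∫ x, f x ∂(T ν : Measure X) = ∫ x, f x ∂(ν : Measure X) := by
    have tendsto_integral_T : Tendsto (fun n => ∫ x, f x ∂(T^[n] (T μ) : Measure X)) U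
        (𝓝 (∫ x, f x ∂(T ν : Measure X))) := by
      simp only [← Function.iterate_succ_apply, Function.iterate_succ_apply', h _ f]
      exact tendsto_integral (P f)
    have asymptotic := (h.tendsto_dist_integral_iterate hP (T μ) μ f).mono_left
      Nat.hyperfilter_le_atTop
    exact dist_eq_zero.1 <|
      tendsto_nhds_unique (tendsto_integral_T.dist (tendsto_integral f)) asymptotic
  exact ⟨ν, ProbabilityMeasure.toMeasure_injective <|
    ext_of_forall_integral_eq_of_IsFiniteMeasure fun f => integral_eq f.toContinuousMap⟩

theorem IsMarkovDual.tendsto_iterate_of_fixedPoint [OpensMeasurableSpace X]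
    (h : IsMarkovDual T P) (hP : HasVanishingOscillation P) {ν : ProbabilityMeasure X}
    (hν : T ν = ν) (μ : ProbabilityMeasure X) : Tendsto (fun n => T^[n] μ) atTop (𝓝 ν) := by
  refine ProbabilityMeasure.tendsto_iff_forall_integral_tendsto.2 fun f => ?_
  have asymptotic := h.tendsto_dist_integral_iterate hP μ ν f.toContinuousMap
  simp only [Function.iterate_fixed hν] at asymptotic
  exact tendsto_iff_dist_tendsto_zero.2 asymptotic

end MarkovDual

section MarkovOperator

variable {Λ X : Type*} [TopologicalSpace Λ] [CompactSpace Λ] [MeasurableSpace Λ]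
  [OpensMeasurableSpace Λ] [PseudoMetricSpace X] [CompactSpace X] {w : Λ → X → X}

/-- The Markov operator `P f x = ∫ f (w_λ x) dp(λ)` of the iterated function system `w` whose maps
are drawn with distribution `p`, acting on continuous functions. -/
noncomputable def markovOperator (hw : Continuous fun q : Λ × X => w q.1 q.2) (p : Measure Λ)
    [IsFiniteMeasure p] (f : C(X, ℝ)) : C(X, ℝ) where
  toFun x := ∫ l, f (w l x) ∂p
  continuous_toFun := by
    have h : Continuous (Function.uncurry fun x l => f (w l x)) :=
      f.continuous.comp (hw.comp continuous_swap)
    simpa only [Measure.restrict_univ] using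
      continuous_parametric_integral_of_continuous (μ := p) h isCompact_univ

variable (hw : Continuous fun q : Λ × X => w q.1 q.2) (p : Measure Λ) [IsProbabilityMeasure p]

lemma dist_markovOperator_le (f : C(X, ℝ)) {ε : ℝ} {x y : X}
    (h : ∀ l, dist (f (w l x)) (f (w l y)) ≤ ε) :
    dist (markovOperator hw p f x) (markovOperator hw p f y) ≤ ε := by
  have integrable (z : X) : Integrable (fun l => f (w l z)) p :=
    (f.continuous.comp (hw.comp (Continuous.prodMk_left z))).integrable_of_hasCompactSupport
      (.of_compactSpace _)
  simp only [dist_eq_norm] at h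
  have bound := norm_integral_le_of_norm_le_const (μ := p) (.of_forall h)
  rw [integral_sub (integrable x) (integrable y), probReal_univ, mul_one] at bound
  exact (dist_eq_norm _ _).trans_le bound

lemma dist_markovOperator_iterate_le (f : C(X, ℝ)) {ε : ℝ} {n : ℕ} {x y : X}
    (h : ∀ σ, dist (f (seqComp w σ n x)) (f (seqComp w σ n y)) ≤ ε) :
    dist ((markovOperator hw p)^[n] f x) ((markovOperator hw p)^[n] f y) ≤ ε := by
  induction n generalizing x y with
  | zero =>
    obtain ⟨l⟩ := nonempty_of_isProbabilityMeasure p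
    exact h fun _ => l
  | succ n ih =>
    rw [Function.iterate_succ_apply']
    refine dist_markovOperator_le hw p _ fun l => ih fun σ => ?_
    simpa only [seqComp_update_succ, Function.comp_apply] using h (Function.update σ n l)

theorem hasVanishingOscillation_markovOperator
    (hyp : ∀ σ : ℕ → Λ, Tendsto (fun n => diam (range (seqComp w σ n))) atTop (𝓝 0)) :
    HasVanishingOscillation (markovOperator hw p) := by
  intro f ε hε
  obtain ⟨δ, hδ, hfδ⟩ := uniformContinuous_iff.1
    (CompactSpace.uniformContinuous_of_continuous f.continuous) ε hε
  obtain ⟨n, hn⟩ := exists_forall_dist_seqComp_lt hw hyp hδ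
  exact ⟨n, fun x y => dist_markovOperator_iterate_le hw p f fun σ => (hfδ (hn σ x y)).le⟩

theorem isMarkovDual_markovOperator [MeasurableSpace X] [BorelSpace X]
    {T : ProbabilityMeasure X → ProbabilityMeasure X}
    (hT : ∀ (μ : ProbabilityMeasure X) (B : Set X), MeasurableSet B →
      (T μ : Measure X) B = ∫⁻ l, (μ : Measure X) ((fun x => w l x) ⁻¹' B) ∂p) :
    IsMarkovDual T (markovOperator hw p) := by
  intro μ f
  have T_eq_map : (T μ : Measure X) = (p.prod (μ : Measure X)).map fun q => w q.1 q.2 := by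
    ext B hB
    rw [hT μ B hB, Measure.map_apply hw.measurable hB, Measure.prod_apply (hw.measurable hB)]
    rfl
  calc ∫ x, f x ∂(T μ : Measure X)
      = ∫ q, f (w q.1 q.2) ∂p.prod (μ : Measure X) := by
        rw [T_eq_map, integral_map hw.measurable.aemeasurable f.continuous.aestronglyMeasurable]
    _ = ∫ x, ∫ l, f (w l x) ∂p ∂(μ : Measure X) :=
        integral_prod_symm _ ((f.continuous.comp hw).integrable_of_hasCompactSupport
          (.of_compactSpace _))

end MarkovOperator

theorem stmt_7_general {Λ X : Type*} [TopologicalSpace Λ] [CompactSpace Λ]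
    [MeasurableSpace Λ] [OpensMeasurableSpace Λ]
    [MetricSpace X] [CompactSpace X] [Nonempty X] [MeasurableSpace X] [BorelSpace X]
    (w : Λ → X → X) (hw : Continuous fun p : Λ × X => w p.1 p.2)
    (hyp : ∀ σ : ℕ → Λ,
      Tendsto (fun n => diam (Set.range (seqComp w σ n))) atTop (𝓝 0))
    (p : Measure Λ) [IsProbabilityMeasure p]
    (T : ProbabilityMeasure X → ProbabilityMeasure X)
    (hT : ∀ (μ : ProbabilityMeasure X) (B : Set X), MeasurableSet B →
      (T μ : Measure X) B = ∫⁻ l, (μ : Measure X) ((fun x => w l x) ⁻¹' B) ∂p) :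
    ∃ ν : ProbabilityMeasure X,
      (∀ μ, Tendsto (fun n => T^[n] μ) atTop (𝓝 ν)) ∧ T ν = ν := by
  have dual := isMarkovDual_markovOperator hw p hT
  have oscillation := hasVanishingOscillation_markovOperator hw p hyp
  obtain ⟨ν, hν⟩ := dual.exists_fixedPoint oscillation
  exact ⟨ν, dual.tendsto_iterate_of_fixedPoint oscillation hν, hν⟩

/-- For a weakly hyperbolic IFS on a compact metric space, the iterates of a
Dirac measure under the transfer operator converge weakly to an invariant
probability measure. -/
theorem stmt_7 {Λ X : Type*} [MetricSpace Λ] [CompactSpace Λ]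
    [MeasurableSpace Λ] [BorelSpace Λ]
    [MetricSpace X] [CompactSpace X] [MeasurableSpace X] [BorelSpace X]
    (w : Λ → X → X) (hw : Continuous fun p : Λ × X => w p.1 p.2)
    (hyp : ∀ σ : ℕ → Λ,
      Tendsto (fun n => diam (Set.range (seqComp w σ n))) atTop (𝓝 0))
    (p : Measure Λ) [IsProbabilityMeasure p]
    (T : ProbabilityMeasure X → ProbabilityMeasure X)
    (hT : ∀ (μ : ProbabilityMeasure X) (B : Set X), MeasurableSet B →
      (T μ : Measure X) B = ∫⁻ l, (μ : Measure X) ((fun x => w l x) ⁻¹' B) ∂p)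
    (a : X) :
    ∃ ν : ProbabilityMeasure X,
      Tendsto (fun n => T^[n] ⟨Measure.dirac a, inferInstance⟩) atTop (𝓝 ν) ∧
        T ν = ν := by
  have : Nonempty X := ⟨a⟩
  obtain ⟨ν, hlim, hν⟩ := stmt_7_general w hw hyp p T hT
  exact ⟨ν, hlim _, hν⟩
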